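/- For all natural numbers n and λ, the coefficients z_n := T(n, n+λ) satisfy the three-term recurrence ((n+2)^2 − λ^2) · z_{n+2} = (n+2) · ((2n+3) · z_{n+1} + 3(n+1) · z_n). -/

import Mathlib

/-!
Put `P = 1 + x + x²` and let `θ = x · d/dx`, which multiplies the coefficient of `x^k` by `k`.
With `N = n + 2` and `k = N + λ`, we have `N² - λ² = 2Nk - k²`, so the left-hand side is the
coefficient of `x^k` in `2N θ(P^N) - θ²(P^N)`. Computing the derivatives (most transparently for
`Q = P / x`, where `θ²Q = Q - 1` and `(θQ)² = Q² - 2Q - 3`) shows that this polynomial equals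
`N(2N - 1) x P^(N-1) + 3N(N - 1) x² P^(N-2)`, whose coefficient at `x^k` is the right-hand side.
-/

open Polynomial

/-- `T n k` is the coefficient of `x^k` in `(1 + x + x^2)^n` over `ℤ`. -/
noncomputable def T (n k : ℕ) : ℤ := (((1 + X + X ^ 2 : ℤ[X])) ^ n).coeff k

theorem coeff_X_mul_derivative (f : ℤ[X]) (k : ℕ) :
    (X * derivative f).coeff k = (k : ℤ) * f.coeff k := by
  cases k with
  | zero => simp
  | succ k => rw [coeff_X_mul, coeff_derivative]; push_cast; ring

/-- The differential equation for `(1 + x + x²)^(n+2)` whose coefficients are the recurrence. -/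
theorem trinomial_pow_differential_equation (n : ℕ) :
    C (2 * (n + 2 : ℤ)) * (X * derivative ((1 + X + X ^ 2 : ℤ[X]) ^ (n + 2)))
      - X * derivative (X * derivative ((1 + X + X ^ 2 : ℤ[X]) ^ (n + 2))) =
    C ((n + 2 : ℤ) * (2 * n + 3)) * (X * (1 + X + X ^ 2) ^ (n + 1))
      + C (3 * (n + 2 : ℤ) * (n + 1)) * (X ^ 2 * (1 + X + X ^ 2) ^ n) := by
  simp only [derivative_mul, derivative_pow_succ, derivative_add, derivative_one, derivative_X,
    derivative_X_pow, derivative_C, map_add, map_mul, map_natCast, map_ofNat, map_one]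
  push_cast
  simp
  ring

theorem trinomial_diagonal_three_term_recurrence (n lam : ℕ) :
    ((n + 2 : ℤ) ^ 2 - (lam : ℤ) ^ 2) * T (n + 2) (n + 2 + lam) =
      (n + 2 : ℤ) * ((2 * n + 3 : ℤ) * T (n + 1) (n + 1 + lam)
        + 3 * (n + 1 : ℤ) * T n (n + lam)) := by
  have h := congrArg (fun p : ℤ[X] => p.coeff (n + 2 + lam))
    (trinomial_pow_differential_equation n)
  have h₁ : (X * (1 + X + X ^ 2 : ℤ[X]) ^ (n + 1)).coeff (n + 2 + lam)
      = T (n + 1) (n + 1 + lam) := by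
    rw [show n + 2 + lam = (n + 1 + lam) + 1 by ring, coeff_X_mul, T]
  have h₂ : (X ^ 2 * (1 + X + X ^ 2 : ℤ[X]) ^ n).coeff (n + 2 + lam) = T n (n + lam) := by
    rw [show n + 2 + lam = (n + lam) + 2 by ring, coeff_X_pow_mul, T]
  simp only [coeff_sub, coeff_add, coeff_C_mul, coeff_X_mul_derivative, h₁, h₂] at h
  rw [← T] at h
  push_cast at h
  linear_combination h
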